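/- Let d be a positive integer and fix q ∈ ℝ. Then the function λ ↦ H(q; λ), defined on the open positive orthant (0, ∞)^d, has a partial derivative with respect to each coordinate λ_j at every point of (0, ∞)^d. -/

import Mathlib

open MeasureTheory ProbabilityTheory Filter

/-- The product of `d` independent standard normal distributions. -/
noncomputable def stdGaussPi (d : ℕ) : Measure (Fin d → ℝ) :=
  Measure.pi fun _ => gaussianReal 0 1

/-- `mixCDF d lam q = H(q; λ) = P(∑ j, λ_j Z_j² ≤ q)` for `Z_1, …, Z_d` IID standard normal. -/
noncomputable def mixCDF (d : ℕ) (lam : Fin d → ℝ) (q : ℝ) : ℝ :=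
  (stdGaussPi d {z | ∑ j, lam j * z j ^ 2 ≤ q}).toReal

lemma aux_slice (t u : ℝ) (ht : 0 < t) :
    (gaussianReal 0 1 {x : ℝ | t * x ^ 2 ≤ u}).toReal =
      ∫ x in (-(√u / √t))..(√u / √t), gaussianPDFReal 0 1 x := by
  have h0 : 0 ≤ √u / √t := by positivity
  rw [intervalIntegral.integral_of_le (by linarith), ← integral_Icc_eq_integral_Ioc]
  rcases lt_or_ge u 0 with hu | hu
  · have : {x : ℝ | t * x ^ 2 ≤ u} = ∅ := by
      ext x
      simp only [Set.mem_ofPred_eq, Set.mem_empty_iff_false, iff_false, not_le]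
      have : 0 ≤ t * x ^ 2 := by positivity
      linarith
    rw [this]
    simp [Real.sqrt_eq_zero_of_nonpos hu.le]
  · have : {x : ℝ | t * x ^ 2 ≤ u} = Set.Icc (-(√u / √t)) (√u / √t) := by
      ext x
      rw [← Real.sqrt_div hu, Set.mem_Icc, ← abs_le, Set.mem_ofPred_eq,
        Real.le_sqrt (abs_nonneg x) (by positivity), sq_abs, le_div_iff₀ ht, mul_comm]
    rw [this, gaussianReal_apply_eq_integral _ one_ne_zero, ENNReal.toReal_ofReal]
    exact integral_nonneg fun x => gaussianPDFReal_nonneg _ _ _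

lemma aux_pdf_le (x : ℝ) : gaussianPDFReal 0 1 x ≤ 1 := by
  rw [gaussianPDFReal]
  have h1 : (1 : ℝ) ≤ √(2 * Real.pi * (1 : NNReal)) := by
    rw [Real.one_le_sqrt]; have := Real.pi_gt_three; push_cast; linarith
  have h2 : Real.exp (-(x - 0) ^ 2 / (2 * (1 : NNReal))) ≤ 1 := by
    rw [Real.exp_le_one_iff]; push_cast; nlinarith [sq_nonneg (x - 0)]
  exact mul_le_one₀ (inv_le_one_of_one_le₀ h1) (Real.exp_nonneg _) h2

lemma aux_pdf_cont : Continuous (gaussianPDFReal 0 1) := by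
  unfold gaussianPDFReal; fun_prop

lemma aux_deriv (s t : ℝ) (ht : 0 < t) :
    HasDerivAt (fun t => ∫ x in (-(s / √t))..(s / √t), gaussianPDFReal 0 1 x)
      ((gaussianPDFReal 0 1 (s / √t) + gaussianPDFReal 0 1 (-(s / √t))) *
        (-(s * (1 / (2 * √t))) / √t ^ 2)) t := by
  have hst : √t ≠ 0 := (Real.sqrt_pos.2 ht).ne'
  have hd : HasDerivAt (fun t => s / √t) (-(s * (1 / (2 * √t))) / √t ^ 2) t := by
    have := (hasDerivAt_const t s).div (Real.hasDerivAt_sqrt ht.ne') hst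
    exact this.congr_deriv (by ring)
  have hP : ∀ y, HasDerivAt (fun y => ∫ x in (0:ℝ)..y, gaussianPDFReal 0 1 x)
      (gaussianPDFReal 0 1 y) y := fun y =>
    intervalIntegral.integral_hasDerivAt_right (aux_pdf_cont.intervalIntegrable _ _)
      (aux_pdf_cont.stronglyMeasurableAtFilter _ _) aux_pdf_cont.continuousAt
  have := ((hP _).comp t hd).sub ((hP _).comp t hd.neg)
  refine (this.congr_of_eventuallyEq (Eventually.of_forall fun r => ?_)).congr_deriv ?_
  · change _ = (∫ x in (0:ℝ)..(s / √r), gaussianPDFReal 0 1 x) -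
      ∫ x in (0:ℝ)..(-(s / √r)), gaussianPDFReal 0 1 x
    rw [intervalIntegral.integral_interval_sub_left]
    all_goals exact aux_pdf_cont.intervalIntegrable _ _
  · change _ - gaussianPDFReal 0 1 (-(s / √t)) * _ = _
    ring

lemma aux_bound (q s t a : ℝ) (ha : 0 < a) (hat : a < t) (hs : 0 ≤ s) (hsq : s ≤ √q) :
    ‖(gaussianPDFReal 0 1 (s / √t) + gaussianPDFReal 0 1 (-(s / √t))) *
        (-(s * (1 / (2 * √t))) / √t ^ 2)‖ ≤ 2 * (√q * (1 / (2 * √a)) / √a ^ 2) := by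
  have hsa : 0 < √a := Real.sqrt_pos.2 ha
  have hst : √a ≤ √t := Real.sqrt_le_sqrt hat.le
  have hst0 : 0 < √t := hsa.trans_le hst
  rw [norm_mul]
  refine mul_le_mul ?_ ?_ (norm_nonneg _) (by norm_num)
  · rw [Real.norm_of_nonneg (add_nonneg (gaussianPDFReal_nonneg _ _ _)
      (gaussianPDFReal_nonneg _ _ _))]
    linarith [aux_pdf_le (s / √t), aux_pdf_le (-(s / √t))]
  · rw [neg_div, norm_neg, Real.norm_of_nonneg (by positivity)]
    gcongr

lemma aux_fubini (n : ℕ) (lam : Fin (n+1) → ℝ) (j : Fin (n+1)) (q t : ℝ) (ht : 0 < t) :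
    mixCDF (n+1) (Function.update lam j t) q =
      ∫ y : Fin n → ℝ, (∫ x in (-(√(q - ∑ i, lam (j.succAbove i) * y i ^ 2) / √t))..(√(q - ∑ i, lam (j.succAbove i) * y i ^ 2) / √t), gaussianPDFReal 0 1 x) ∂(stdGaussPi n) := by
  have hmp := measurePreserving_piFinSuccAbove (fun _ : Fin (n+1) => gaussianReal 0 1) j
  set S : Set (ℝ × (Fin n → ℝ)) :=
    {p | t * p.1 ^ 2 ≤ q - ∑ i, lam (j.succAbove i) * p.2 i ^ 2} with hS
  have hSm : MeasurableSet S := measurableSet_le (by fun_prop) (by fun_prop)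
  have hpre : {z : Fin (n+1) → ℝ | ∑ i, Function.update lam j t i * z i ^ 2 ≤ q} =
      (MeasurableEquiv.piFinSuccAbove (fun _ => ℝ) j) ⁻¹' S := by
    ext z
    change ∑ i, Function.update lam j t i * z i ^ 2 ≤ q ↔ t * (z j) ^ 2 ≤ q - ∑ i, lam (j.succAbove i) * z (j.succAbove i) ^ 2
    rw [Fin.sum_univ_succAbove _ j, le_sub_iff_add_le]
    simp
  unfold mixCDF stdGaussPi
  rw [hpre, hmp.measure_preimage hSm.nullMeasurableSet, Measure.prod_apply_symm hSm,
    ← integral_toReal (measurable_measure_prodMk_right hSm).aemeasurable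
      (Eventually.of_forall fun y => measure_lt_top _ _)]
  refine integral_congr_ae (Eventually.of_forall fun y => ?_)
  exact aux_slice t (q - ∑ i, lam (j.succAbove i) * y i ^ 2) ht

theorem stmt7 (d : ℕ) (hd : 0 < d) (q : ℝ) :
    ∀ (lam : Fin d → ℝ), (∀ i, 0 < lam i) → ∀ j : Fin d,
      ∃ D : ℝ, HasDerivAt (fun t => mixCDF d (Function.update lam j t) q) D (lam j) := by
  intro lam hlam j
  obtain ⟨n, rfl⟩ : ∃ n, d = n + 1 := ⟨d - 1, by omega⟩
  have : IsProbabilityMeasure (stdGaussPi n) := by unfold stdGaussPi; infer_instance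
  set s : (Fin n → ℝ) → ℝ := fun y => √(q - ∑ i, lam (j.succAbove i) * y i ^ 2) with hs
  have hsc : Continuous s := by rw [hs]; fun_prop
  have hsq : ∀ y, s y ≤ √q := fun y => Real.sqrt_le_sqrt <| by
    have : 0 ≤ ∑ i, lam (j.succAbove i) * y i ^ 2 :=
      Finset.sum_nonneg fun i _ => mul_nonneg (hlam _).le (sq_nonneg _)
    linarith
  have hs0 : ∀ y, 0 ≤ s y := fun y => Real.sqrt_nonneg _
  have hFc : ∀ t : ℝ, Continuous fun y => ∫ x in (-(s y / √t))..(s y / √t), gaussianPDFReal 0 1 x := by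
    intro t
    have hP : Continuous fun y => ∫ x in (0:ℝ)..y, gaussianPDFReal 0 1 x :=
      intervalIntegral.continuous_primitive (fun a b => aux_pdf_cont.intervalIntegrable a b) 0
    have h1 : Continuous fun y => s y / √t := hsc.div_const _
    refine ((hP.comp h1).sub (hP.comp h1.neg)).congr fun y => ?_
    change (∫ x in (0:ℝ)..(s y / √t), gaussianPDFReal 0 1 x) -
      (∫ x in (0:ℝ)..(-(s y / √t)), gaussianPDFReal 0 1 x) = _
    rw [intervalIntegral.integral_interval_sub_left]
    all_goals exact aux_pdf_cont.intervalIntegrable _ _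
  have hl := hlam j
  have hnhds : Set.Ioi (lam j / 2) ∈ nhds (lam j) := Ioi_mem_nhds (by linarith)
  have key := hasDerivAt_integral_of_dominated_loc_of_deriv_le (μ := stdGaussPi n)
    (F := fun t y => ∫ x in (-(s y / √t))..(s y / √t), gaussianPDFReal 0 1 x)
    (F' := fun t y => (gaussianPDFReal 0 1 (s y / √t) + gaussianPDFReal 0 1 (-(s y / √t))) *
        (-(s y * (1 / (2 * √t))) / √t ^ 2))
    (bound := fun _ => 2 * (√q * (1 / (2 * √(lam j / 2))) / √(lam j / 2) ^ 2))
    hnhds (Eventually.of_forall fun t => (hFc t).aestronglyMeasurable) ?_ ?_ ?_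
    (integrable_const _) ?_
  · refine ⟨_, key.2.congr_of_eventuallyEq ?_⟩
    filter_upwards [Ioi_mem_nhds hl] with t ht
    exact aux_fubini n lam j q t ht
  · refine Integrable.of_bound (hFc _).aestronglyMeasurable (2 * (√q / √(lam j))) (Eventually.of_forall fun y => ?_)
    refine (intervalIntegral.norm_integral_le_of_norm_le_const (C := 1) fun x _ => ?_).trans ?_
    · rw [Real.norm_of_nonneg (gaussianPDFReal_nonneg _ _ _)]; exact aux_pdf_le x
    · have h2 : s y / √(lam j) ≤ √q / √(lam j) := by gcongr; exact hsq y
      have h3 : 0 ≤ s y / √(lam j) := div_nonneg (hs0 y) (Real.sqrt_nonneg _)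
      rw [abs_of_nonneg (by linarith)]
      linarith
  · have := aux_pdf_cont
    exact Continuous.aestronglyMeasurable (by fun_prop)
  · exact Eventually.of_forall fun y t ht =>
      aux_bound q (s y) t _ (by linarith) ht (hs0 y) (hsq y)
  · exact Eventually.of_forall fun y t ht => aux_deriv (s y) t (by
      have : lam j / 2 < t := ht
      linarith)
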